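/- Fix a horizon N ∈ ℕ and a discount factor γ ∈ ℝ, and define the finite-horizon discounted objective J(t) = Σ_{k=0}^{N} γ^k · E_k(t), where E_k(t) = Σ_τ η(s_k,a_k) · P_k(t)(τ) sums over trajectories of length k. Then J is differentiable and J'(t) = Σ_{k=0}^{N} γ^k · Σ_τ η(s_k,a_k) · P_k(t)(τ) · ( (d/dt) log(π t s_k a_k) + Σ_{i=0}^{k-1} (d/dt) log( f t s_i a_i s_{i+1} · π t s_i a_i ) ). (Sensitivity of the expected value over the full discounted Markov chain.) -/

import Mathlib

/-!
A trajectory weight is a product of parameter-dependent factors. Wherever these factors do not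
vanish, its derivative is the weight times the sum of their logarithmic derivatives. The initial
weight does not depend on the parameter and may vanish, so it stays outside the logarithmic
derivative as a constant factor. A finite sum of such weights is then differentiated term by term.
-/

theorem hasDerivAt_mul_logDeriv {𝕜 𝕜' : Type*} [NontriviallyNormedField 𝕜]
    [NontriviallyNormedField 𝕜'] [NormedAlgebra 𝕜 𝕜'] {g : 𝕜 → 𝕜'} {t : 𝕜}
    (hg : DifferentiableAt 𝕜 g t) (hg0 : g t ≠ 0) :
    HasDerivAt g (g t * logDeriv g t) t := by
  simpa only [logDeriv_apply, mul_div_cancel₀ _ hg0] using hg.hasDerivAt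

/-- A state-action trajectory of length `k`: the states `s_0, …, s_k` paired with the actions
`a_0, …, a_k`. -/
abbrev Trajectory (S A : Type*) (k : ℕ) : Type _ :=
  (Fin (k + 1) → S) × (Fin (k + 1) → A)

namespace Trajectory

variable {S A : Type*} {k : ℕ}

/-- The weight `ρ0(s_0) π(s_k, a_k) ∏_{i < k} f(s_i, a_i, s_{i+1}) π(s_i, a_i)` of a trajectory
under the initial weight `ρ0`, the policy `π` and the transition kernel `f`. -/
def weight {R : Type*} [CommMonoid R] (τ : Trajectory S A k) (ρ0 : S → R) (π : S → A → R)
    (f : S → A → S → R) : R :=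
  ρ0 (τ.1 0) * π (τ.1 (Fin.last k)) (τ.2 (Fin.last k)) *
    ∏ i : Fin k,
      (f (τ.1 i.castSucc) (τ.2 i.castSucc) (τ.1 i.succ) * π (τ.1 i.castSucc) (τ.2 i.castSucc))

variable {𝕜 𝕜' : Type*} [NontriviallyNormedField 𝕜] [NontriviallyNormedField 𝕜']
  [NormedAlgebra 𝕜 𝕜']

/-- The score of a trajectory: the sum of the logarithmic derivatives of the factors of its
weight that depend on the parameter. For real positive factors these are the derivatives of the
logarithms, but `logDeriv` needs no choice of logarithm. -/
noncomputable def score (τ : Trajectory S A k) (π : 𝕜 → S → A → 𝕜') (f : 𝕜 → S → A → S → 𝕜')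
    (t : 𝕜) : 𝕜' :=
  logDeriv (fun x => π x (τ.1 (Fin.last k)) (τ.2 (Fin.last k))) t +
    ∑ i : Fin k,
      logDeriv (fun x => f x (τ.1 i.castSucc) (τ.2 i.castSucc) (τ.1 i.succ) *
        π x (τ.1 i.castSucc) (τ.2 i.castSucc)) t

theorem hasDerivAt_weight (τ : Trajectory S A k) (ρ0 : S → 𝕜') {π : 𝕜 → S → A → 𝕜'}
    {f : 𝕜 → S → A → S → 𝕜'} {t : 𝕜}
    (hπ : ∀ s a, DifferentiableAt 𝕜 (fun x => π x s a) t) (hπ0 : ∀ s a, π t s a ≠ 0)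
    (hf : ∀ s a s', DifferentiableAt 𝕜 (fun x => f x s a s') t)
    (hf0 : ∀ s a s', f t s a s' ≠ 0) :
    HasDerivAt (fun x => τ.weight ρ0 (π x) (f x))
      (τ.weight ρ0 (π t) (f t) * τ.score π f t) t := by
  let last (x : 𝕜) : 𝕜' := π x (τ.1 (Fin.last k)) (τ.2 (Fin.last k))
  let step (i : Fin k) (x : 𝕜) : 𝕜' :=
    f x (τ.1 i.castSucc) (τ.2 i.castSucc) (τ.1 i.succ) * π x (τ.1 i.castSucc) (τ.2 i.castSucc)
  have hlast : DifferentiableAt 𝕜 last t := hπ _ _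
  have hstep (i : Fin k) : DifferentiableAt 𝕜 (step i) t := (hf _ _ _).fun_mul (hπ _ _)
  have hstep0 (i : Fin k) : step i t ≠ 0 := mul_ne_zero (hf0 _ _ _) (hπ0 _ _)
  have hprod : DifferentiableAt 𝕜 (fun x => ∏ i, step i x) t := .fun_finsetProd fun i _ => hstep i
  have hprod0 : ∏ i, step i t ≠ 0 := Finset.prod_ne_zero_iff.2 fun i _ => hstep0 i
  have hscore : logDeriv (fun x => last x * ∏ i, step i x) t = τ.score π f t := by
    rw [logDeriv_mul t (hπ0 _ _) hprod0 hlast hprod,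
      logDeriv_prod (fun i _ => hstep0 i) fun i _ => hstep i]
    rfl
  have hderiv := hasDerivAt_mul_logDeriv (hlast.fun_mul hprod) (mul_ne_zero (hπ0 _ _) hprod0)
  rw [hscore] at hderiv
  simpa only [weight, mul_assoc] using hderiv.const_mul (ρ0 (τ.1 0))

theorem score_eq_deriv_log (τ : Trajectory S A k) {π : ℝ → S → A → ℝ} {f : ℝ → S → A → S → ℝ}
    {t : ℝ} (hπ : ∀ s a, DifferentiableAt ℝ (fun x => π x s a) t) (hπ0 : ∀ s a, π t s a ≠ 0)
    (hf : ∀ s a s', DifferentiableAt ℝ (fun x => f x s a s') t)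
    (hf0 : ∀ s a s', f t s a s' ≠ 0) :
    τ.score π f t =
      deriv (fun x => Real.log (π x (τ.1 (Fin.last k)) (τ.2 (Fin.last k)))) t +
        ∑ i : Fin k,
          deriv (fun x => Real.log (f x (τ.1 i.castSucc) (τ.2 i.castSucc) (τ.1 i.succ) *
            π x (τ.1 i.castSucc) (τ.2 i.castSucc))) t :=
  congrArg₂ (· + ·) (Real.deriv_log_comp_eq_logDeriv (hπ _ _) (hπ0 _ _)).symm <|
    Finset.sum_congr rfl fun _ _ => (Real.deriv_log_comp_eq_logDeriv
      ((hf _ _ _).fun_mul (hπ _ _)) (mul_ne_zero (hf0 _ _ _) (hπ0 _ _))).symm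

end Trajectory

theorem discounted_markov_chain_sensitivity_general
    {𝕜 𝕜' S A : Type*} [NontriviallyNormedField 𝕜] [NontriviallyNormedField 𝕜']
    [NormedAlgebra 𝕜 𝕜'] [Fintype S] [Fintype A]
    (N : ℕ) (γ : 𝕜') (ρ0 : S → 𝕜') (η : S → A → 𝕜')
    {π : 𝕜 → S → A → 𝕜'} {f : 𝕜 → S → A → S → 𝕜'} {t : 𝕜}
    (hπ : ∀ s a, DifferentiableAt 𝕜 (fun x => π x s a) t) (hπ0 : ∀ s a, π t s a ≠ 0)
    (hf : ∀ s a s', DifferentiableAt 𝕜 (fun x => f x s a s') t)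
    (hf0 : ∀ s a s', f t s a s' ≠ 0) :
    HasDerivAt
      (fun x => ∑ k ∈ Finset.range (N + 1), γ ^ k * ∑ τ : Trajectory S A k,
        η (τ.1 (Fin.last k)) (τ.2 (Fin.last k)) * τ.weight ρ0 (π x) (f x))
      (∑ k ∈ Finset.range (N + 1), γ ^ k * ∑ τ : Trajectory S A k,
        η (τ.1 (Fin.last k)) (τ.2 (Fin.last k)) * τ.weight ρ0 (π t) (f t) * τ.score π f t) t := by
  refine .fun_sum fun k _ => .const_mul _ (.fun_sum fun τ _ => ?_)
  rw [mul_assoc]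
  exact (τ.hasDerivAt_weight ρ0 hπ hπ0 hf hf0).const_mul _

/-- Sensitivity of the expected value over the full discounted Markov chain:
`J(t) = Σ_{k=0}^{N} γ^k · E_k(t)` is differentiable with derivative
`Σ_{k=0}^{N} γ^k Σ_τ η(s_k,a_k) P_k(t)(τ) (d/dt log π(a_k|s_k) + Σ_{i<k} d/dt log(f π))`. -/
theorem discounted_markov_chain_sensitivity
    {S A : Type*} [Fintype S] [Fintype A] [Nonempty S] [Nonempty A]
    (N : ℕ) (γ : ℝ) (ρ0 : S → ℝ) (η : S → A → ℝ)
    (π : ℝ → S → A → ℝ) (f : ℝ → S → A → S → ℝ)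
    (hπpos : ∀ t s a, 0 < π t s a)
    (hπdiff : ∀ s a, Differentiable ℝ (fun t => π t s a))
    (hfpos : ∀ t s a s', 0 < f t s a s')
    (hfdiff : ∀ s a s', Differentiable ℝ (fun t => f t s a s'))
    (P : ∀ k : ℕ, ℝ → ((Fin (k + 1) → S) × (Fin (k + 1) → A)) → ℝ)
    (hP : ∀ k t τ, P k t τ =
      ρ0 (τ.1 0) * π t (τ.1 (Fin.last k)) (τ.2 (Fin.last k)) *
        ∏ i : Fin k,
          (f t (τ.1 i.castSucc) (τ.2 i.castSucc) (τ.1 i.succ) *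
            π t (τ.1 i.castSucc) (τ.2 i.castSucc)))
    (t : ℝ) :
    HasDerivAt
      (fun t => ∑ k ∈ Finset.range (N + 1), γ ^ k *
        ∑ τ : (Fin (k + 1) → S) × (Fin (k + 1) → A),
          η (τ.1 (Fin.last k)) (τ.2 (Fin.last k)) * P k t τ)
      (∑ k ∈ Finset.range (N + 1), γ ^ k *
        ∑ τ : (Fin (k + 1) → S) × (Fin (k + 1) → A),
          η (τ.1 (Fin.last k)) (τ.2 (Fin.last k)) * P k t τ *
            (deriv (fun t => Real.log (π t (τ.1 (Fin.last k)) (τ.2 (Fin.last k)))) t +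
              ∑ i : Fin k,
                deriv (fun t =>
                  Real.log (f t (τ.1 i.castSucc) (τ.2 i.castSucc) (τ.1 i.succ) *
                    π t (τ.1 i.castSucc) (τ.2 i.castSucc))) t)) t := by
  have hπ0 s a := (hπpos t s a).ne'
  have hf0 s a s' := (hfpos t s a s').ne'
  simpa only [hP, Trajectory.weight, Trajectory.score_eq_deriv_log _ (hπdiff · · t) hπ0
    (hfdiff · · · t) hf0] using discounted_markov_chain_sensitivity_general N γ ρ0 η
      (hπdiff · · t) hπ0 (hfdiff · · · t) hf0
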